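/- Let n ≥ 1, let p, q ∈ M_n with p ≠ 1 and q ≠ 1, and let x = x_1⋯x_k and y = y_1⋯y_l be nonempty words over X_n whose final letters satisfy x_k ≠ y_l. Set v := p·x = q·y (equal in M_n), and suppose that (⋆) for every u ∈ pM_n ∩ qM_n and every letter z ∈ X_n, u·z ≠ v, and that q ∉ pM_n (no path from p to q in the Cayley graph). Then: (1) v is an intersection base; (2) x_k ∈ Q_n and y_l ∈ Q_n; (3) k = 1, i.e. x consists of the single letter x_k. -/

import Mathlib

/-!
Orienting the relations from `R_n` to `L_n` gives rules that replace a word of `P_n Q_n` by another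
word of `P_n Q_n`, where `P_n` and `Q_n` partition the alphabet. Hence no two rules overlap, and
multiplying a normal form by a letter changes at most its last two letters. Write
`p' = p x_1 ⋯ x_{k-1}` and `q' = q y_1 ⋯ y_{l-1}`. From `p' x_k = q' y_l` with `x_k ≠ y_l` it
follows that `p' = w g` and `q' = w h` with `g, h ∈ P_n`, where `g x_k` and `h y_l` have a common
reduct. No relation ends in a letter of `P_n`, so `k > 1` forces `w ∈ pM_n`. Consequently
`q = w h ∈ pM_n` when `l = 1`, while `p' = w g ∈ qM_n` when `l > 1`; both are excluded.
-/

namespace Malcev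

/-- The alphabet `X_n`: letters `a, b, c, d` together with `A_i, B_i, C_i, D_i`
for `i` ranging over `Fin n` (so `A ⟨0, _⟩` represents `A_1`, etc.). -/
inductive Letter (n : ℕ) : Type
  | a | b | c | d
  | A (i : Fin n) | B (i : Fin n) | C (i : Fin n) | D (i : Fin n)
  deriving DecidableEq

open FreeMonoid

/-- The defining relations `ρ_n`. -/
inductive rel (n : ℕ) : FreeMonoid (Letter n) → FreeMonoid (Letter n) → Prop
  | da (h : 0 < n) :
      rel n (of .d * of .a) (of (.A ⟨0, h⟩) * of (.C ⟨0, h⟩))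
  | AD (i : ℕ) (h : i + 1 < n) :
      rel n (of (.A ⟨i, Nat.lt_of_succ_lt h⟩) * of (.D ⟨i, Nat.lt_of_succ_lt h⟩))
            (of (.A ⟨i + 1, h⟩) * of (.C ⟨i + 1, h⟩))
  | An (h : 0 < n) :
      rel n (of (.A ⟨n - 1, Nat.sub_lt h Nat.one_pos⟩) * of (.D ⟨n - 1, Nat.sub_lt h Nat.one_pos⟩))
            (of .d * of .b)
  | cb (h : 0 < n) :
      rel n (of .c * of .b)
            (of (.B ⟨n - 1, Nat.sub_lt h Nat.one_pos⟩) * of (.D ⟨n - 1, Nat.sub_lt h Nat.one_pos⟩))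
  | BC (i : ℕ) (h : i + 1 < n) :
      rel n (of (.B ⟨i + 1, h⟩) * of (.C ⟨i + 1, h⟩))
            (of (.B ⟨i, Nat.lt_of_succ_lt h⟩) * of (.D ⟨i, Nat.lt_of_succ_lt h⟩))

/-- The congruence on the free monoid generated by `ρ_n`. -/
def Mcon (n : ℕ) : Con (FreeMonoid (Letter n)) := conGen (rel n)

/-- The presented monoid `M_n = Mon⟨X_n | ρ_n⟩`. -/
abbrev Mn (n : ℕ) : Type := (Mcon n).Quotient

/-- The quotient (natural) map `X_n* → M_n`. -/
def mk (n : ℕ) : FreeMonoid (Letter n) →* Mn n := (Mcon n).mk'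

/-- The image in `M_n` of a single letter. -/
def gen {n : ℕ} (x : Letter n) : Mn n := mk n (of x)

/-- The image in `M_n` of a word (given as a list of letters). -/
def word {n : ℕ} (w : List (Letter n)) : Mn n := mk n (ofList w)

/-- The set `P_n = {c, d, A_1, …, A_n, B_1, …, B_n}`. -/
def inP {n : ℕ} : Letter n → Prop
  | .c => True | .d => True | .A _ => True | .B _ => True | _ => False

/-- The set `Q_n = {a, b, C_1, …, C_n, D_1, …, D_n}`. -/
def inQ {n : ℕ} : Letter n → Prop
  | .a => True | .b => True | .C _ => True | .D _ => True | _ => False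

/-- `inR x y` means the two-letter word `xy` belongs to
`R_n = {db, A_1C_1, …, A_nC_n, B_1D_1, …, B_nD_n}`. -/
def inR {n : ℕ} : Letter n → Letter n → Prop
  | .d, .b => True
  | .A i, .C j => i = j
  | .B i, .D j => i = j
  | _, _ => False

/-- `inL x y` means the two-letter word `xy` belongs to
`L_n = {cb, da, A_1D_1, …, A_nD_n, B_2C_2, …, B_nC_n}`. -/
def inL {n : ℕ} : Letter n → Letter n → Prop
  | .c, .b => True
  | .d, .a => True
  | .A i, .D j => i = j
  | .B i, .C j => i = j ∧ 1 ≤ i.val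
  | _, _ => False

/-- A word is in left normal form if no two consecutive letters form a word in `R_n`. -/
def LeftNormal {n : ℕ} (w : List (Letter n)) : Prop :=
  List.Chain' (fun x y => ¬ inR x y) w

/-- `v ∈ M_n` is an intersection base if some word `a_1 ⋯ a_m` (`m ≥ 2`) in left
normal form equals `v` in `M_n` and its final two letters form a word in `L_n`. -/
def IsIntersectionBase {n : ℕ} (v : Mn n) : Prop :=
  ∃ (w : List (Letter n)) (x y : Letter n),
    LeftNormal (w ++ [x, y]) ∧ word (w ++ [x, y]) = v ∧ inL x y

/-- The principal right ideal `pM_n`. -/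
def rIdeal {n : ℕ} (p : Mn n) : Set (Mn n) := {x | ∃ m, x = p * m}


/-- A rewriting system with rules `xy → red (x, y)` on two-letter words. Every rule has its first
letters in `heads` and its second letters outside, so that rules do not overlap; a pair to which no
rule applies is encoded as a fixed point of `red`. -/
structure PairRewriting (α : Type*) where
  red : α × α → α × α
  heads : Set α
  red_red (a : α × α) : red (red a) = red a
  mapsTo_red : Set.MapsTo red (heads ×ˢ headsᶜ) (heads ×ˢ headsᶜ)
  red_eq_self {a : α × α} (ha : a ∉ heads ×ˢ headsᶜ) : red a = a

namespace PairRewriting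

variable {α M : Type*} [Monoid M] (S : PairRewriting α)

/-- The congruence generated by the rules of `S`. -/
def con : Con (FreeMonoid α) :=
  conGen fun u v => ∃ a, u = of a.1 * of a.2 ∧ v = of (S.red a).1 * of (S.red a).2

/-- `S.Presents φ` says that `φ` exhibits `M` as the monoid presented by the rules of `S`. -/
structure Presents (φ : FreeMonoid α →* M) : Prop where
  surjective : Function.Surjective φ
  ker_eq : Con.ker φ = S.con

/-- A word is normal if no rule of `S` applies to it. -/
def IsNormal (w : List α) : Prop :=
  w.IsChain fun x y => S.red (x, y) = (x, y)

/-- Right multiplication of a normal form by a letter. Normal forms are stored as reversed lists, so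
that the letters affected by a rule come first. -/
def push : List α → α → List α
  | [], z => [z]
  | h :: t, z => (S.red (h, z)).2 :: (S.red (h, z)).1 :: t

/-- The normal form of a word, as a reversed list. -/
def nf (u : FreeMonoid α) : List α :=
  u.toList.foldl S.push []

variable {S}

lemma mem_of_red_eq_red {a b : α × α} (hab : a ≠ b) (h : S.red a = S.red b) :
    a ∈ S.heads ×ˢ S.headsᶜ := by
  by_contra ha
  rw [S.red_eq_self ha] at h
  by_cases hb : b ∈ S.heads ×ˢ S.headsᶜ
  · exact ha (h ▸ S.mapsTo_red hb)
  · exact hab (h.trans (S.red_eq_self hb))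

lemma red_eq_self_of_snd_mem_heads (x : α) {z : α} (hz : z ∈ S.heads) : S.red (x, z) = (x, z) :=
  S.red_eq_self fun h => h.2 hz

lemma push_of_mem_heads (s : List α) {z : α} (hz : z ∈ S.heads) : S.push s z = z :: s := by
  cases s with
  | nil => rfl
  | cons h t => simp only [push, red_eq_self_of_snd_mem_heads h hz]

lemma push_push_red (s : List α) (a : α × α) :
    S.push (S.push s (S.red a).1) (S.red a).2 = S.push (S.push s a.1) a.2 := by
  by_cases ha : a ∈ S.heads ×ˢ S.headsᶜ
  · rw [push_of_mem_heads s ha.1, push_of_mem_heads s (S.mapsTo_red ha).1]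
    simp only [push, Prod.mk.eta, S.red_red]
  · rw [S.red_eq_self ha]

lemma exists_red_eq_red_of_push_eq_push {s t : List α} {x y : α} (hxy : x ≠ y)
    (h : S.push s x = S.push t y) :
    ∃ w g g', s = g :: w ∧ t = g' :: w ∧ S.red (g, x) = S.red (g', y) := by
  cases s <;> cases t <;> simp only [push, List.cons.injEq, reduceCtorEq, and_false] at h
  · exact absurd h.1 hxy
  · obtain ⟨hsnd, hfst, rfl⟩ := h
    exact ⟨_, _, _, rfl, rfl, Prod.ext hfst hsnd⟩

lemma isNormal_reverse_push {s : List α} (z : α) (hs : S.IsNormal s.reverse) :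
    S.IsNormal (S.push s z).reverse := by
  rw [IsNormal, List.isChain_reverse] at hs ⊢
  cases s with
  | nil => exact .singleton z
  | cons h t =>
    refine .cons_cons (S.red_red (h, z)) ?_
    by_cases hz : (h, z) ∈ S.heads ×ˢ S.headsᶜ
    · cases t with
      | nil => exact .singleton _
      | cons g t =>
        exact .cons_cons (red_eq_self_of_snd_mem_heads g (S.mapsTo_red hz).1) hs.tail
    · rwa [S.red_eq_self hz]

lemma nf_mul_of (u : FreeMonoid α) (z : α) : S.nf (u * of z) = S.push (S.nf u) z := by
  simp [nf]

lemma isNormal_reverse_nf (u : FreeMonoid α) : S.IsNormal (S.nf u).reverse := by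
  induction u using List.reverseRecOn with
  | nil => exact .nil
  | append_singleton u z ih =>
    change S.IsNormal (S.nf (ofList u * of z)).reverse
    rw [nf_mul_of]
    exact isNormal_reverse_push z ih

lemma nf_eq_of_con {u v : FreeMonoid α} (h : S.con u v) : S.nf u = S.nf v := by
  -- Acting alike on every list, unlike having the same normal form, is clearly a congruence.
  let pushCon : Con (FreeMonoid α) :=
    { r := fun u v => ∀ s, u.toList.foldl S.push s = v.toList.foldl S.push s
      iseqv := ⟨fun _ _ => rfl, fun h s => (h s).symm, fun h h' s => (h s).trans (h' s)⟩
      mul' := fun h h' s => by simp [h s, h' _] }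
  have hle : S.con ≤ pushCon := Con.conGen_le.2 fun u v ⟨a, hu, hv⟩ s => by
    subst hu hv
    exact (push_push_red s a).symm
  exact hle h []

namespace Presents

variable {φ : FreeMonoid α →* M} (hφ : S.Presents φ)
include hφ

lemma map_eq_map_iff {u v : FreeMonoid α} : φ u = φ v ↔ S.con u v := by
  rw [← hφ.ker_eq, Con.ker_rel]

lemma map_red (a : α × α) :
    φ (of (S.red a).1) * φ (of (S.red a).2) = φ (of a.1) * φ (of a.2) := by
  rw [← map_mul, ← map_mul, eq_comm, hφ.map_eq_map_iff]
  exact ConGen.Rel.of _ _ ⟨a, rfl, rfl⟩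

lemma map_reverse_push (s : List α) (z : α) :
    φ (ofList (S.push s z).reverse) = φ (ofList s.reverse) * φ (of z) := by
  cases s with
  | nil => simp [push]
  | cons h t => simp [push, ofList_append, mul_assoc, hφ.map_red]

lemma map_reverse_nf (u : FreeMonoid α) : φ (ofList (S.nf u).reverse) = φ u := by
  induction u using List.reverseRecOn with
  | nil => rfl
  | append_singleton u z ih =>
    change φ (ofList (S.nf (ofList u * of z)).reverse) = φ (ofList u * of z)
    rw [nf_mul_of, hφ.map_reverse_push, map_mul]
    exact congrArg (· * φ (of z)) ih

theorem exists_red_eq_red_of_mul_eq_mul {p q : M} {x y : α} (hxy : x ≠ y)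
    (h : p * φ (of x) = q * φ (of y)) :
    ∃ (w : List α) (g g' : α), p = φ (ofList w) * φ (of g) ∧ q = φ (ofList w) * φ (of g') ∧
      S.red (g, x) = S.red (g', y) ∧
      S.IsNormal (w ++ [(S.red (g, x)).1, (S.red (g, x)).2]) := by
  obtain ⟨u, rfl⟩ := hφ.surjective p
  obtain ⟨v, rfl⟩ := hφ.surjective q
  rw [← map_mul, ← map_mul, hφ.map_eq_map_iff] at h
  have hpush : S.push (S.nf u) x = S.push (S.nf v) y := by
    rw [← nf_mul_of, ← nf_mul_of, nf_eq_of_con h]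
  obtain ⟨w, g, g', hu, hv, hred⟩ := exists_red_eq_red_of_push_eq_push hxy hpush
  refine ⟨w.reverse, g, g', ?_, ?_, hred, ?_⟩
  · rw [← hφ.map_reverse_nf u, hu, List.reverse_cons, ofList_append, map_mul, ofList_singleton]
  · rw [← hφ.map_reverse_nf v, hv, List.reverse_cons, ofList_append, map_mul, ofList_singleton]
  · simpa [nf_mul_of, hu, push] using isNormal_reverse_nf (S := S) (u * of x)

lemma mul_right_cancel_of_mem_heads {p q : M} {g : α} (hg : g ∈ S.heads)
    (h : p * φ (of g) = q * φ (of g)) : p = q := by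
  obtain ⟨u, rfl⟩ := hφ.surjective p
  obtain ⟨v, rfl⟩ := hφ.surjective q
  rw [← map_mul, ← map_mul, hφ.map_eq_map_iff] at h
  have hnf := nf_eq_of_con h
  rw [nf_mul_of, nf_mul_of, push_of_mem_heads _ hg, push_of_mem_heads _ hg] at hnf
  rw [← hφ.map_reverse_nf u, ← hφ.map_reverse_nf v, List.tail_eq_of_cons_eq hnf]

lemma eq_of_mul_eq_mul_of_mem_heads {p q : M} {z g : α} (hg : g ∈ S.heads)
    (h : p * φ (of z) = q * φ (of g)) : p = q := by
  by_cases hz : g = z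
  · exact hφ.mul_right_cancel_of_mem_heads hg (hz ▸ h)
  · obtain ⟨_, _, _, -, -, hred, -⟩ := hφ.exists_red_eq_red_of_mul_eq_mul hz h.symm
    have hmem := mem_of_red_eq_red (fun e => hz (congrArg Prod.snd e)) hred
    exact absurd hg hmem.2

lemma dvd_of_mul_eq_mul_of_mem_heads {p r : M} {x : List α} {g : α} (hx : x ≠ [])
    (hg : g ∈ S.heads) (h : p * φ (ofList x) = r * φ (of g)) : p ∣ r := by
  obtain ⟨x, z, rfl⟩ := (List.eq_nil_or_concat' x).resolve_left hx
  rw [ofList_append, ofList_singleton, map_mul, ← mul_assoc] at h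
  exact ⟨φ (ofList x), (hφ.eq_of_mul_eq_mul_of_mem_heads hg h).symm⟩

theorem dvd_or_dvd_of_mul_eq_mul {p q r : M} {x y : List α} {g g' : α} (hx : x ≠ [])
    (hg : g ∈ S.heads) (hg' : g' ∈ S.heads) (hp : p * φ (ofList x) = r * φ (of g))
    (hq : q * φ (ofList y) = r * φ (of g')) : p ∣ q ∨ q ∣ p * φ (ofList x) := by
  have hpr : p ∣ r := hφ.dvd_of_mul_eq_mul_of_mem_heads hx hg hp
  by_cases hy : y = []
  · left
    rw [hy, ofList_nil, map_one, mul_one] at hq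
    exact hq ▸ hpr.mul_right _
  · right
    exact hp ▸ (hφ.dvd_of_mul_eq_mul_of_mem_heads hy hg' hq).mul_right _

end Presents

end PairRewriting

variable {n : ℕ}

lemma inQ_iff_not_inP {z : Letter n} : inQ z ↔ ¬ inP z := by
  cases z <;> simp [inP, inQ]

lemma inP_and_inQ_of_inR {x y : Letter n} (h : inR x y) : inP x ∧ inQ y := by
  cases x <;> cases y <;> simp_all [inR, inP, inQ]

lemma inP_and_inQ_of_inL {x y : Letter n} (h : inL x y) : inP x ∧ inQ y := by
  cases x <;> cases y <;> simp_all [inL, inP, inQ]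

lemma not_inR_of_inL {x y : Letter n} (h : inL x y) : ¬ inR x y := by
  cases x <;> cases y <;> simp_all [inR, inL]

lemma word_concat (w : List (Letter n)) (z : Letter n) : word (w ++ [z]) = word w * gen z :=
  map_mul (mk n) _ _

section Rewriting

variable [NeZero n]

/-- The relations of `M_n`, oriented as rules replacing a word of `R_n` by one of `L_n`. -/
def toL : Letter n × Letter n → Letter n × Letter n
  | (.d, .b) =>
    let last : Fin n := ⟨n - 1, Nat.sub_lt (NeZero.pos n) Nat.one_pos⟩
    (.A last, .D last)
  | (.A i, .C j) =>
    if i = j then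
      if i.val = 0 then (.d, .a) else (.A ⟨i - 1, by omega⟩, .D ⟨i - 1, by omega⟩)
    else (.A i, .C j)
  | (.B i, .D j) =>
    if i = j then
      if h : i.val + 1 < n then (.B ⟨i + 1, h⟩, .C ⟨i + 1, h⟩) else (.c, .b)
    else (.B i, .D j)
  | a => a

lemma inL_toL {x y : Letter n} (h : inR x y) : inL (toL (x, y)).1 (toL (x, y)).2 := by
  cases x <;> cases y <;> simp only [inR] at h <;> simp only [toL, h, if_true]
  case d.b => rfl
  all_goals split_ifs <;> simp [inL]

lemma toL_eq_self {x y : Letter n} (h : ¬ inR x y) : toL (x, y) = (x, y) := by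
  cases x <;> cases y <;> simp_all [inR, toL]

lemma inR_of_toL_ne_self {a : Letter n × Letter n} (h : toL a ≠ a) : inR a.1 a.2 :=
  not_not.1 (mt toL_eq_self h)

lemma not_inR_of_toL_eq_self {x y : Letter n} (h : toL (x, y) = (x, y)) : ¬ inR x y := fun hR => by
  have hL := inL_toL hR
  rw [h] at hL
  exact not_inR_of_inL hL hR

variable (n) in
/-- The rewriting system `R_n → L_n`. -/
def rewriting : PairRewriting (Letter n) where
  red := toL
  heads := {z | inP z}
  red_red a := by
    by_cases h : toL a = a
    · rw [h, h]
    · exact toL_eq_self (not_inR_of_inL (inL_toL (inR_of_toL_ne_self h)))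
  mapsTo_red a ha := by
    by_cases h : toL a = a
    · rwa [h]
    · have hL := inP_and_inQ_of_inL (inL_toL (inR_of_toL_ne_self h))
      exact ⟨hL.1, inQ_iff_not_inP.1 hL.2⟩
  red_eq_self ha := toL_eq_self fun hR =>
    ha ⟨(inP_and_inQ_of_inR hR).1, inQ_iff_not_inP.1 (inP_and_inQ_of_inR hR).2⟩

lemma exists_toL_of_rel {u v : FreeMonoid (Letter n)} (h : rel n u v) :
    ∃ a, v = of a.1 * of a.2 ∧ u = of (toL a).1 * of (toL a).2 := by
  cases h with
  | da h => exact ⟨(.A _, .C _), rfl, by simp [toL]⟩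
  | AD i h => exact ⟨(.A _, .C _), rfl, by simp [toL]⟩
  | An h => exact ⟨(.d, .b), rfl, rfl⟩
  | cb h => exact ⟨(.B _, .D _), rfl, by simp [toL, Nat.sub_add_cancel h]⟩
  | BC i h => exact ⟨(.B _, .D _), rfl, by simp [toL, h]⟩

lemma rel_toL {x y : Letter n} (h : inR x y) :
    rel n (of (toL (x, y)).1 * of (toL (x, y)).2) (of x * of y) := by
  cases x <;> cases y <;> simp only [inR] at h
  case d.b => exact .An (NeZero.pos n)
  case A.C i j =>
    obtain ⟨_ | i, hi⟩ := i <;> subst h <;> simp only [toL, if_true]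
    · exact .da hi
    · exact .AD i hi
  case B.D i j =>
    subst h
    by_cases hi : i.val + 1 < n <;> simp only [toL, if_true, hi, dite_true, dite_false]
    · exact .BC i hi
    · have hlast : i = ⟨n - 1, Nat.sub_lt i.pos Nat.one_pos⟩ := Fin.ext (by grind)
      exact hlast ▸ .cb i.pos

lemma Mcon_eq_con_rewriting : Mcon n = (rewriting n).con := by
  apply le_antisymm <;> refine Con.conGen_le.2 fun u v h => ?_
  · obtain ⟨a, rfl, rfl⟩ := exists_toL_of_rel h
    exact Con.symm _ (ConGen.Rel.of _ _ ⟨a, rfl, rfl⟩)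
  · obtain ⟨⟨x, y⟩, rfl, rfl⟩ := h
    change Mcon n _ (of (toL (x, y)).1 * of (toL (x, y)).2)
    by_cases hR : inR x y
    · exact Con.symm _ (ConGen.Rel.of _ _ (rel_toL hR))
    · rw [toL_eq_self hR]
      exact Con.refl _ _

lemma presents_mk : (rewriting n).Presents (mk n) where
  surjective := Con.mk'_surjective
  ker_eq := (Con.mk'_ker _).trans Mcon_eq_con_rewriting

lemma isIntersectionBase_of_isNormal {w : List (Letter n)} {x y : Letter n}
    (hxy : (rewriting n).red (x, y) ≠ (x, y))
    (hw : (rewriting n).IsNormal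
      (w ++ [((rewriting n).red (x, y)).1, ((rewriting n).red (x, y)).2])) :
    IsIntersectionBase (word w * gen x * gen y) := by
  refine ⟨w, _, _, hw.imp fun _ _ => not_inR_of_toL_eq_self, ?_,
    inL_toL (inR_of_toL_ne_self hxy)⟩
  rw [List.append_cons, word_concat, word_concat, mul_assoc, mul_assoc]
  exact congrArg (word w * ·) (presents_mk.map_red (x, y))

end Rewriting

/-- the key lemma (Lemma `star`). -/
theorem Mn_star_lemma (n : ℕ) (hn : 1 ≤ n) (p q : Mn n)
    (hp : p ≠ 1) (hq : q ≠ 1)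
    (x y : List (Letter n)) (hx : x ≠ []) (hy : y ≠ [])
    (hlast : x.getLast hx ≠ y.getLast hy)
    (v : Mn n) (hvx : v = p * word x) (hvy : v = q * word y)
    (hstar : ∀ u ∈ rIdeal p ∩ rIdeal q, ∀ z : Letter n, u * gen z ≠ v)
    (hpq : q ∉ rIdeal p) :
    IsIntersectionBase v ∧ inQ (x.getLast hx) ∧ inQ (y.getLast hy) ∧ x.length = 1 := by
  have : NeZero n := .of_pos hn
  obtain ⟨x, z, rfl⟩ := (List.eq_nil_or_concat' x).resolve_left hx
  obtain ⟨y, z', rfl⟩ := (List.eq_nil_or_concat' y).resolve_left hy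
  simp only [List.getLast_append_singleton] at hlast ⊢
  rw [word_concat, ← mul_assoc] at hvx hvy
  obtain ⟨w, g, h, hg, hh, hred, hw⟩ :=
    presents_mk.exists_red_eq_red_of_mul_eq_mul hlast (hvx.symm.trans hvy)
  have hne : (g, z) ≠ (h, z') := fun e => hlast (congrArg Prod.snd e)
  obtain ⟨hgP, hzQ⟩ := PairRewriting.mem_of_red_eq_red hne hred
  obtain ⟨hhP, hzQ'⟩ := PairRewriting.mem_of_red_eq_red hne.symm hred.symm
  refine ⟨?_, inQ_iff_not_inP.2 hzQ, inQ_iff_not_inP.2 hzQ', ?_⟩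
  · by_cases hgz : (rewriting n).red (g, z) = (g, z)
    · have hhz : (rewriting n).red (h, z') ≠ (h, z') := fun e => hne (hgz.symm.trans (hred.trans e))
      rw [hvy, hh]
      exact isIntersectionBase_of_isNormal hhz (hred ▸ hw)
    · rw [hvx, hg]
      exact isIntersectionBase_of_isNormal hgz hw
  · by_contra hlen
    rcases presents_mk.dvd_or_dvd_of_mul_eq_mul (x := x) (by grind) hgP hhP hg hh with hdvd | hdvd
    · exact hpq hdvd
    · exact hstar _ ⟨⟨_, rfl⟩, hdvd⟩ z hvx.symm

end Malcev
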